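/- Assume ℒ_k(1) = 1 and that φ_k is locally (r,2)-Hölder continuous for all k ∈ ℕ₀. Then for every k, n ∈ ℕ, the operator ℒ^n_k maps r-Hölder continuous functions on Σ_k to r-Hölder continuous functions on Σ_{k+n}; moreover, for any r-Hölder continuous f : Σ_k → ℝ one has ‖ℒ^n_k(f)‖_∞ ≤ ‖f‖_∞, and the Hölder constant of index 1 of ℒ^n_k(f) is at most κ_f r^n + ‖f‖_∞ (B_{k+n} − 1), where κ_f is the Hölder constant of index n+1 of f. -/

import Mathlib

open MeasureTheory Real Filter

namespace NSShift

/-- The ambient sequence space `ℕ^ℕ`. -/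
abbrev Seq := ℕ → ℕ

/-- The shift map `T`. -/
def shift (x : Seq) : Seq := fun i => x (i + 1)

/-- Prepend one symbol to a sequence. -/
def cons (a : ℕ) (x : Seq) : Seq := fun i =>
  match i with
  | 0 => a
  | j + 1 => x j

/-- The non-stationary shift space `Σ_n` determined by alphabets `W` and
transition relations `A` (`A n i j` means `α^n_{ij} = 1`). -/
def Sig (W : ℕ → Set ℕ) (A : ℕ → ℕ → ℕ → Prop) (n : ℕ) : Set Seq :=
  {x | (∀ i, x i ∈ W (n + i)) ∧ ∀ i, A (n + i) (x i) (x (i + 1))}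

/-- `x` and `y` agree in their first `k` coordinates (lie in a common `k`-cylinder). -/
def agrees (x y : Seq) (k : ℕ) : Prop := ∀ i < k, x i = y i

open scoped Classical in
/-- The shift metric `d_r(x,y) = r^{min{i : x_i ≠ y_i}}`. -/
noncomputable def dr (r : ℝ) (x y : Seq) : ℝ :=
  if x = y then 0 else r ^ sInf {i | x i ≠ y i}

/-- `f` is locally `(r,m)`-Hölder continuous with Hölder constant `κ` of index `m` on `S`:
`V_k(f) ≤ κ r^k` for all `k ≥ m`. -/
def HolderOn (S : Set Seq) (r κ : ℝ) (m : ℕ) (f : Seq → ℝ) : Prop :=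
  ∀ k, m ≤ k → ∀ x ∈ S, ∀ y ∈ S, agrees x y k → |f x - f y| ≤ κ * r ^ k

/-- The Birkhoff sum `S_n(φ_k) = Σ_{i=0}^{n-1} φ_{k+i} ∘ T^i`. -/
noncomputable def birkhoff (φ : ℕ → Seq → ℝ) (k n : ℕ) (x : Seq) : ℝ :=
  ∑ i ∈ Finset.range n, φ (k + i) (shift^[i] x)

/-- `log B_m = Σ_{i=1}^{m} κ_{m−i} r^i`. -/
noncomputable def logB (κ : ℕ → ℝ) (r : ℝ) (m : ℕ) : ℝ :=
  ∑ i ∈ Finset.Icc 1 m, κ (m - i) * r ^ i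

/-- `B_m = exp Σ_{i=1}^{m} κ_{m−i} r^i`. -/
noncomputable def Bconst (κ : ℕ → ℝ) (r : ℝ) (m : ℕ) : ℝ := Real.exp (logB κ r m)


open scoped Classical in
/-- The Ruelle operator `ℒ_k(f)(x) = Σ_{Ty=x} e^{φ_k(y)} f(y)`, for `x ∈ Σ_{k+1}`. -/
noncomputable def Ruelle (W : ℕ → Set ℕ) (A : ℕ → ℕ → ℕ → Prop) (φ : ℕ → Seq → ℝ)
    (k : ℕ) (f : Seq → ℝ) (x : Seq) : ℝ :=
  ∑' a : ℕ, if cons a x ∈ Sig W A k then Real.exp (φ k (cons a x)) * f (cons a x) else 0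

/-- The iterated Ruelle operator `ℒ^n_k = ℒ_{k+n-1} ∘ ⋯ ∘ ℒ_k`. -/
noncomputable def RuelleIter (W : ℕ → Set ℕ) (A : ℕ → ℕ → ℕ → Prop) (φ : ℕ → Seq → ℝ)
    (k : ℕ) : ℕ → (Seq → ℝ) → Seq → ℝ
  | 0 => fun f => f
  | n + 1 => fun f => Ruelle W A φ (k + n) (RuelleIter W A φ k n f)

/-!
Fix `x, y ∈ Σ_{k+1}` in a common `m`-cylinder with `m ≥ 1`. They have the same preimage symbols
`a`, and each pair of preimages `ax, ay` lies in a common `(m+1)`-cylinder. As the weights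
`e^{φ_k(ax)}` sum to `1`, `ℒ_k(g)(x) - ℒ_k(g)(y)` is an average of the terms
`(g(ax) - g(ay)) - g(ay) (e^{φ_k(ay) - φ_k(ax)} - 1)`, which gives
`V_m(ℒ_k g) ≤ V_{m+1}(g) + ‖g‖_∞ (e^{κ_k r^{m+1}} - 1)`. Iterating this and using
`log B_{m+1} = r (log B_m + κ_m)` together with superadditivity of `t ↦ e^t - 1` on `[0, ∞)`
yields `V_m(ℒ^n_k f) ≤ V_{n+m}(f) + ‖f‖_∞ (e^{r^m log B_{k+n}} - 1)`. Finally the factor `r^m` is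
pulled out of the exponent by convexity of `exp`.
-/

section Exponential

theorem abs_exp_sub_one_le_exp_sub_one {d c : ℝ} (h : |d| ≤ c) :
    |Real.exp d - 1| ≤ Real.exp c - 1 := by
  have h_abs : |Real.exp d - 1| ≤ Real.exp |d| - 1 := by
    simpa [← Complex.ofReal_exp, ← Complex.ofReal_one, ← Complex.ofReal_sub] using
      Complex.norm_exp_sub_sum_le_exp_norm_sub_sum (d : ℂ) 1
  exact h_abs.trans (sub_le_sub_right (Real.exp_le_exp.2 h) 1)

theorem exp_sub_one_add_exp_sub_one_le {s t : ℝ} (hs : 0 ≤ s) (ht : 0 ≤ t) :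
    (Real.exp s - 1) + (Real.exp t - 1) ≤ Real.exp (s + t) - 1 := by
  rw [Real.exp_add]
  linarith [mul_nonneg (sub_nonneg.2 (Real.one_le_exp hs)) (sub_nonneg.2 (Real.one_le_exp ht))]

theorem exp_mul_sub_one_le {t : ℝ} (ht₀ : 0 ≤ t) (ht₁ : t ≤ 1) (L : ℝ) :
    Real.exp (t * L) - 1 ≤ t * (Real.exp L - 1) := by
  have h := convexOn_exp.2 (Set.mem_univ L) (Set.mem_univ 0) ht₀ (sub_nonneg.2 ht₁) (by ring)
  simp only [smul_eq_mul, mul_zero, add_zero, Real.exp_zero] at h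
  linarith

theorem abs_exp_mul_sub_exp_mul_le {α β u v c D M : ℝ} (huv : |u - v| ≤ D) (hαβ : |α - β| ≤ c)
    (hv : |v| ≤ M) :
    |Real.exp α * u - Real.exp β * v| ≤ Real.exp α * (D + M * (Real.exp c - 1)) := by
  have h_factor : Real.exp α * u - Real.exp β * v =
      Real.exp α * ((u - v) - v * (Real.exp (β - α) - 1)) := by
    rw [Real.exp_sub]
    field_simp
    ring
  have h_distortion : |v * (Real.exp (β - α) - 1)| ≤ M * (Real.exp c - 1) := by
    rw [abs_mul]
    exact mul_le_mul hv (abs_exp_sub_one_le_exp_sub_one (abs_sub_comm α β ▸ hαβ))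
      (abs_nonneg _) ((abs_nonneg v).trans hv)
  rw [h_factor, abs_mul, Real.abs_exp]
  gcongr
  exact (abs_sub _ _).trans (add_le_add huv h_distortion)

end Exponential

section WeightedSums

variable {ι : Type*} {s M : ℝ} {α β u v : ι → ℝ}

theorem norm_exp_mul_le (hu : ∀ i, |u i| ≤ M) (i : ι) :
    ‖Real.exp (α i) * u i‖ ≤ Real.exp (α i) * M := by
  rw [norm_mul, Real.norm_eq_abs, Real.norm_eq_abs, Real.abs_exp]
  exact mul_le_mul_of_nonneg_left (hu i) (Real.exp_pos _).le

theorem summable_exp_mul (hα : Summable fun i => Real.exp (α i)) (hu : ∀ i, |u i| ≤ M) :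
    Summable fun i => Real.exp (α i) * u i :=
  .of_norm_bounded (hα.mul_right M) (norm_exp_mul_le hu)

theorem abs_tsum_exp_mul_le (hα : HasSum (fun i => Real.exp (α i)) s) (hu : ∀ i, |u i| ≤ M) :
    |∑' i, Real.exp (α i) * u i| ≤ s * M :=
  tsum_of_norm_bounded (hα.mul_right M) (norm_exp_mul_le hu)

theorem abs_tsum_exp_mul_sub_tsum_exp_mul_le {c D : ℝ}
    (hα : HasSum (fun i => Real.exp (α i)) s)
    (hu : Summable fun i => Real.exp (α i) * u i) (hv : Summable fun i => Real.exp (β i) * v i)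
    (huv : ∀ i, |u i - v i| ≤ D) (hαβ : ∀ i, |α i - β i| ≤ c) (hM : ∀ i, |v i| ≤ M) :
    |∑' i, Real.exp (α i) * u i - ∑' i, Real.exp (β i) * v i| ≤
      s * (D + M * (Real.exp c - 1)) := by
  rw [← hu.tsum_sub hv, ← Real.norm_eq_abs]
  exact tsum_of_norm_bounded (hα.mul_right _) fun i =>
    abs_exp_mul_sub_exp_mul_le (huv i) (hαβ i) (hM i)

end WeightedSums

section DistortionConstant

variable {κ : ℕ → ℝ} {r : ℝ}

theorem logB_eq_sum_range (κ : ℕ → ℝ) (r : ℝ) (m : ℕ) :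
    logB κ r m = ∑ j ∈ Finset.range m, κ (m - (j + 1)) * r ^ (j + 1) := by
  rw [Finset.range_eq_Ico, Finset.sum_Ico_add' (fun i => κ (m - i) * r ^ i) 0 m 1]
  rfl

theorem logB_succ (κ : ℕ → ℝ) (r : ℝ) (m : ℕ) :
    logB κ r (m + 1) = r * (logB κ r m + κ m) := by
  simp only [logB_eq_sum_range, Finset.sum_range_succ', Nat.add_sub_add_right, mul_add,
    Finset.mul_sum, zero_add, Nat.sub_zero, pow_one]
  congr 1
  · exact Finset.sum_congr rfl fun j _ => by ring
  · ring

theorem logB_nonneg (hκ : ∀ k, 0 ≤ κ k) (hr : 0 ≤ r) (m : ℕ) : 0 ≤ logB κ r m :=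
  Finset.sum_nonneg fun i _ => mul_nonneg (hκ _) (pow_nonneg hr i)

end DistortionConstant

/-- The estimate `V_m(f) ≤ c` for the `m`-th variation on `S`, phrased without the supremum so that
no boundedness assumption is needed. In particular `HolderOn S r κ m f` says
`VariationLE S j f (κ * r ^ j)` for all `j ≥ m`. -/
def VariationLE (S : Set Seq) (m : ℕ) (f : Seq → ℝ) (c : ℝ) : Prop :=
  ∀ x ∈ S, ∀ y ∈ S, agrees x y m → |f x - f y| ≤ c

/-- The symbols `a` for which `ax` is an admissible preimage of `x`; they index the sum defining
`ℒ_k` at `x`. -/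
def preimageSymbols (W : ℕ → Set ℕ) (A : ℕ → ℕ → ℕ → Prop) (k : ℕ) (x : Seq) : Set ℕ :=
  {a | cons a x ∈ Sig W A k}

section RuelleOperator

variable {W : ℕ → Set ℕ} {A : ℕ → ℕ → ℕ → Prop} {φ : ℕ → Seq → ℝ} {k m : ℕ} {x y : Seq}
  {g : Seq → ℝ} {M : ℝ}

theorem agrees.cons (h : agrees x y m) (a : ℕ) : agrees (cons a x) (cons a y) (m + 1)
  | 0, _ => rfl
  | j + 1, hj => h j (Nat.lt_of_succ_lt_succ hj)

theorem cons_mem_Sig_iff {a : ℕ} (hx : x ∈ Sig W A (k + 1)) :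
    cons a x ∈ Sig W A k ↔ a ∈ W k ∧ A k a (x 0) := by
  refine ⟨fun h => ⟨h.1 0, h.2 0⟩, fun ⟨ha, hax⟩ => ⟨?_, ?_⟩⟩
  · rintro (_ | i)
    · exact ha
    · rw [← Nat.add_assoc, Nat.add_right_comm]
      exact hx.1 i
  · rintro (_ | i)
    · exact hax
    · rw [← Nat.add_assoc, Nat.add_right_comm]
      exact hx.2 i

theorem preimageSymbols_congr (hx : x ∈ Sig W A (k + 1)) (hy : y ∈ Sig W A (k + 1))
    (h : x 0 = y 0) : preimageSymbols W A k x = preimageSymbols W A k y := by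
  ext a
  simp only [preimageSymbols, Set.mem_ofPred_eq, cons_mem_Sig_iff hx, cons_mem_Sig_iff hy, h]

theorem Ruelle_eq_tsum (W : ℕ → Set ℕ) (A : ℕ → ℕ → ℕ → Prop) (φ : ℕ → Seq → ℝ) (k : ℕ)
    (g : Seq → ℝ) (x : Seq) :
    Ruelle W A φ k g x =
      ∑' a : preimageSymbols W A k x, Real.exp (φ k (cons a x)) * g (cons a x) := by
  classical
  rw [tsum_subtype _ fun a => Real.exp (φ k (cons a x)) * g (cons a x)]
  simp only [Ruelle, Set.indicator_apply, preimageSymbols, Set.mem_ofPred_eq]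

theorem hasSum_exp_of_Ruelle_one (h : Ruelle W A φ k (fun _ => 1) x = 1) :
    HasSum (fun a : preimageSymbols W A k x => Real.exp (φ k (cons a x))) 1 := by
  simp only [Ruelle_eq_tsum, mul_one] at h
  have h_summable : Summable fun a : preimageSymbols W A k x => Real.exp (φ k (cons a x)) := by
    by_contra h_not
    exact zero_ne_one ((tsum_eq_zero_of_not_summable h_not).symm.trans h)
  exact h ▸ h_summable.hasSum

theorem abs_Ruelle_le (hx : Ruelle W A φ k (fun _ => 1) x = 1)
    (hg : ∀ z ∈ Sig W A k, |g z| ≤ M) : |Ruelle W A φ k g x| ≤ M := by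
  rw [Ruelle_eq_tsum, ← one_mul M]
  exact abs_tsum_exp_mul_le (hasSum_exp_of_Ruelle_one hx) fun a => hg _ a.2

theorem VariationLE.ruelle {c D : ℝ} (hm : 1 ≤ m)
    (hnorm : ∀ x ∈ Sig W A (k + 1), Ruelle W A φ k (fun _ => 1) x = 1)
    (hg : ∀ z ∈ Sig W A k, |g z| ≤ M) (hD : VariationLE (Sig W A k) (m + 1) g D)
    (hc : VariationLE (Sig W A k) (m + 1) (φ k) c) :
    VariationLE (Sig W A (k + 1)) m (Ruelle W A φ k g) (D + M * (Real.exp c - 1)) := by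
  intro x hx y hy hxy
  have h_symbols := preimageSymbols_congr hy hx (hxy 0 hm).symm
  have hwx := hasSum_exp_of_Ruelle_one (hnorm x hx)
  have hwy := hasSum_exp_of_Ruelle_one (hnorm y hy)
  have hmem (a : preimageSymbols W A k x) : cons a y ∈ Sig W A k := h_symbols.superset a.2
  rw [h_symbols] at hwy
  rw [Ruelle_eq_tsum, Ruelle_eq_tsum, h_symbols, ← one_mul (D + _)]
  exact abs_tsum_exp_mul_sub_tsum_exp_mul_le hwx
    (summable_exp_mul hwx.summable fun a => hg _ a.2)
    (summable_exp_mul hwy.summable fun a => hg _ (hmem a))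
    (fun a => hD _ a.2 _ (hmem a) (hxy.cons a))
    (fun a => hc _ a.2 _ (hmem a) (hxy.cons a))
    (fun a => hg _ (hmem a))

end RuelleOperator

section Iterates

variable {W : ℕ → Set ℕ} {A : ℕ → ℕ → ℕ → Prop} {φ : ℕ → Seq → ℝ} {k : ℕ} {f : Seq → ℝ} {M : ℝ}

theorem abs_RuelleIter_le
    (hnorm : ∀ k, ∀ x ∈ Sig W A (k + 1), Ruelle W A φ k (fun _ => 1) x = 1)
    (hM : ∀ x ∈ Sig W A k, |f x| ≤ M) (n : ℕ) :
    ∀ x ∈ Sig W A (k + n), |RuelleIter W A φ k n f x| ≤ M := by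
  induction n with
  | zero => exact hM
  | succ n ih => exact fun x hx => abs_Ruelle_le (hnorm (k + n) x hx) ih

theorem HolderOn.variationLE_RuelleIter {r κf : ℝ} {κ : ℕ → ℝ} {j : ℕ} (hr : 0 ≤ r)
    (hκ : ∀ k, 0 ≤ κ k) (hφ : ∀ k, HolderOn (Sig W A k) r (κ k) 2 (φ k))
    (hnorm : ∀ k, ∀ x ∈ Sig W A (k + 1), Ruelle W A φ k (fun _ => 1) x = 1)
    (hf : HolderOn (Sig W A k) r κf j f) (hM : ∀ x ∈ Sig W A k, |f x| ≤ M)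
    {n m : ℕ} (hm : 1 ≤ m) (hj : j ≤ n + m) :
    VariationLE (Sig W A (k + n)) m (RuelleIter W A φ k n f)
      (κf * r ^ (n + m) + M * (Real.exp (r ^ m * logB κ r (k + n)) - 1)) := by
  have h_exponent (n m : ℕ) : 0 ≤ r ^ m * logB κ r (k + n) :=
    mul_nonneg (pow_nonneg hr m) (logB_nonneg hκ hr _)
  induction n generalizing m with
  | zero =>
    intro x hx y hy hxy
    have hM₀ : 0 ≤ M := (abs_nonneg _).trans (hM x hx)
    have h_exp : 0 ≤ M * (Real.exp (r ^ m * logB κ r (k + 0)) - 1) :=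
      mul_nonneg hM₀ (sub_nonneg.2 (Real.one_le_exp (h_exponent 0 m)))
    rw [zero_add] at hj ⊢
    exact (hf m hj x hx y hy hxy).trans (le_add_of_nonneg_right h_exp)
  | succ n ih =>
    intro x hx y hy hxy
    have hM₀ : 0 ≤ M := (abs_nonneg _).trans (abs_RuelleIter_le hnorm hM (n + 1) x hx)
    have h_logB : r ^ m * logB κ r (k + (n + 1)) =
        r ^ (m + 1) * logB κ r (k + n) + κ (k + n) * r ^ (m + 1) := by
      rw [← add_assoc, logB_succ]
      ring
    have h_step := VariationLE.ruelle hm (hnorm (k + n)) (abs_RuelleIter_le hnorm hM n)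
      (ih (m := m + 1) (by lia) (by lia)) (hφ (k + n) (m + 1) (by lia)) x hx y hy hxy
    have h_superadditive := mul_le_mul_of_nonneg_left (exp_sub_one_add_exp_sub_one_le
      (h_exponent n (m + 1)) (mul_nonneg (hκ (k + n)) (pow_nonneg hr (m + 1)))) hM₀
    rw [h_logB, Nat.add_right_comm n 1 m, add_assoc n m 1]
    refine h_step.trans ?_
    linarith

end Iterates

/-- If `ℒ_k(1) = 1` and every `φ_k` is locally `(r,2)`-Hölder, then `ℒ^n_k`
maps `r`-Hölder continuous functions on `Σ_k` to `r`-Hölder continuous functions on `Σ_{k+n}`: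
the sup-norm does not increase, and the Hölder constant of index 1 of `ℒ^n_k(f)` is bounded by
`κ_f r^n + ‖f‖_∞ (B_{k+n} − 1)`, where `κ_f` is a Hölder constant of index `n+1` of `f`. -/
theorem ruelle_iter_preserves_holder
    (W : ℕ → Set ℕ) (A : ℕ → ℕ → ℕ → Prop)
    (r : ℝ) (hr0 : 0 < r) (hr1 : r < 1)
    (φ : ℕ → Seq → ℝ) (κ : ℕ → ℝ) (hκ : ∀ k, 0 ≤ κ k)
    (hφ : ∀ k, HolderOn (Sig W A k) r (κ k) 2 (φ k))
    (hnorm : ∀ k, ∀ x ∈ Sig W A (k + 1), Ruelle W A φ k (fun _ => 1) x = 1)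
    (k n : ℕ) (f : Seq → ℝ) (κf Mf : ℝ)
    (hf : HolderOn (Sig W A k) r κf (n + 1) f)
    (hMf : ∀ x ∈ Sig W A k, |f x| ≤ Mf) :
    (∀ x ∈ Sig W A (k + n), |RuelleIter W A φ k n f x| ≤ Mf) ∧
      HolderOn (Sig W A (k + n)) r (κf * r ^ n + Mf * (Bconst κ r (k + n) - 1)) 1
        (RuelleIter W A φ k n f) := by
  have h_bound := abs_RuelleIter_le hnorm hMf n
  refine ⟨h_bound, fun m hm x hx y hy hxy => ?_⟩
  have hM₀ : 0 ≤ Mf := (abs_nonneg _).trans (h_bound x hx)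
  calc |RuelleIter W A φ k n f x - RuelleIter W A φ k n f y|
      ≤ κf * r ^ (n + m) + Mf * (Real.exp (r ^ m * logB κ r (k + n)) - 1) :=
        hf.variationLE_RuelleIter hr0.le hκ hφ hnorm hMf hm (by lia) x hx y hy hxy
    _ ≤ κf * r ^ (n + m) + Mf * (r ^ m * (Bconst κ r (k + n) - 1)) := by
        gcongr
        exact exp_mul_sub_one_le (pow_nonneg hr0.le m) (pow_le_one₀ hr0.le hr1.le) _
    _ = (κf * r ^ n + Mf * (Bconst κ r (k + n) - 1)) * r ^ m := by ring

end NSShift
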